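/- Let 0<α<1 and let φ be a Schwartz function on ℝ with supp φ ⊂ (−∞,A] for some A ∈ ℝ. Then the right Marchaud fractional derivative (D_right)^α φ(t) = (1/Γ(−α)) ∫_t^∞ (φ(τ)−φ(t))/(τ−t)^{1+α} dτ is a C^∞ function supported in (−∞,A], and for every integer k ≥ 0 there exists a constant C>0 such that |d^k/dt^k (D_right)^α φ(t)| ≤ C/(1+|t|^{1+α}) for all t ∈ ℝ. -/

import Mathlib

open MeasureTheory Real Filter Set
open scoped ENNReal Topology

noncomputable section

/-- One-sided Hardy–Littlewood maximal function `M⁻u(t) = sup_{h>0} (1/h) ∫_{t-h}^{t} |u|`. -/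
def MMinus (u : ℝ → ℝ) (t : ℝ) : ℝ≥0∞ :=
  ⨆ (h : ℝ) (_ : 0 < h), ENNReal.ofReal ((∫ τ in Set.Ioc (t - h) t, |u τ|) / h)

/-- One-sided Hardy–Littlewood maximal function `M⁺u(t) = sup_{h>0} (1/h) ∫_{t}^{t+h} |u|`. -/
def MPlus (u : ℝ → ℝ) (t : ℝ) : ℝ≥0∞ :=
  ⨆ (h : ℝ) (_ : 0 < h), ENNReal.ofReal ((∫ τ in Set.Ioc t (t + h), |u τ|) / h)

/-- A weight on ℝ: positive and locally integrable. -/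
def IsWeight (ω : ℝ → ℝ) : Prop :=
  (∀ t, 0 < ω t) ∧ MeasureTheory.LocallyIntegrable ω volume

/-- The one-sided Sawyer class `A_p^-(ℝ)`.  For `p = 1` it is the condition
`M⁺ω ≤ C ω` a.e.; for `1 < p` it is the one-sided `A_p` integral condition,
where `p' = p/(p-1)` so that `1 - p' = 1 - p/(p-1)` and `1/p' = 1 - 1/p`. -/
def SawyerApMinus (p : ℝ) (ω : ℝ → ℝ) : Prop :=
  IsWeight ω ∧
  ((p = 1 ∧ ∃ C > 0, ∀ᵐ t ∂volume, MPlus ω t ≤ ENNReal.ofReal (C * ω t)) ∨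
   (1 < p ∧ ∃ C > 0, ∀ a h : ℝ, 0 < h →
      ((∫ τ in Set.Ioc a (a + h), ω τ) / h) ^ (1 / p) *
      ((∫ τ in Set.Ioc (a - h) a, ω τ ^ (1 - p / (p - 1))) / h) ^ (1 - 1 / p) ≤ C))

/-- The weighted measure `ω(t) dt` on ℝ, so that `L^p(ℝ,ω) = L^p(wMeasure ω)`. -/
def wMeasure (ω : ℝ → ℝ) : Measure ℝ := volume.withDensity (fun t => ENNReal.ofReal (ω t))

/-- The Marchaud left fractional derivative
`(D_left)^α u(t) = (1/Γ(-α)) ∫_{-∞}^t (u(τ)-u(t))/(t-τ)^{1+α} dτ`. -/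
def marchaudLeft (α : ℝ) (u : ℝ → ℝ) (t : ℝ) : ℝ :=
  (1 / Real.Gamma (-α)) * ∫ τ in Set.Iio t, (u τ - u t) / (t - τ) ^ (1 + α)

/-- The Marchaud right fractional derivative
`(D_right)^α φ(t) = (1/Γ(-α)) ∫_t^∞ (φ(τ)-φ(t))/(τ-t)^{1+α} dτ`. -/
def DRight (α : ℝ) (φ : ℝ → ℝ) (t : ℝ) : ℝ :=
  (1 / Real.Gamma (-α)) * ∫ τ in Set.Ioi t, (φ τ - φ t) / (τ - t) ^ (1 + α)

/-- `v` is the distributional (weak) derivative of `u` on ℝ. -/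
def HasWeakDeriv (u v : ℝ → ℝ) : Prop :=
  ∀ φ : ℝ → ℝ, ContDiff ℝ (⊤ : ℕ∞) φ → HasCompactSupport φ →
    ∫ t, u t * deriv φ t = -∫ t, v t * φ t

/-!
After the substitution `τ = t + s`, the integrand of `DRight α f t` is the increment
`f (t + s) - f t` over `s ^ (1 + α)`. For bounded Lipschitz `f` it is dominated, uniformly in `t`,
by a multiple of `min s 1 / s ^ (1 + α)`, which is integrable exactly because `0 < α < 1`. Hence one
may differentiate under the integral sign, and `DRight α` commutes with differentiation.

For the decay, split at `s = (1 + |t|) / 2`. Below it, the mean value theorem and the decay of `f'`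
on `[t, t + s]` bound the increment by `(1 + |t|) ^ (-(1 + α)) * min s 1`. Above it, `s` is
comparable to or larger than `1 + |t|`, so the kernel `s ^ (-(1 + α))` itself supplies the decay in
front of the integrable `|f (t + s)|`, and `|f t|` is small by assumption.
-/

lemma integrableOn_min_one_div_rpow {α : ℝ} (hα : α ∈ Ioo (0 : ℝ) 1) :
    IntegrableOn (fun s : ℝ => min s 1 / s ^ (1 + α)) (Ioi 0) := by
  rw [← Ioc_union_Ioi_eq_Ioi (zero_le_one' ℝ)]
  refine IntegrableOn.union ?near ?far
  case near =>
    have h : IntegrableOn (fun s : ℝ => s ^ (-α)) (Ioc 0 1) :=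
      (intervalIntegrable_iff_integrableOn_Ioc_of_le zero_le_one).1
        (intervalIntegral.intervalIntegrable_rpow' (by linarith [hα.2]))
    refine h.congr_fun (fun s hs => ?_) measurableSet_Ioc
    simp only [min_eq_left hs.2]
    rw [rpow_one_add' hs.1.le (by linarith [hα.1]), rpow_neg hs.1.le, div_mul_cancel_left₀ hs.1.ne']
  case far =>
    have h : IntegrableOn (fun s : ℝ => s ^ (-(1 + α))) (Ioi 1) :=
      integrableOn_Ioi_rpow_of_lt (by linarith [hα.1]) one_pos
    refine h.congr_fun (fun s (hs : 1 < s) => ?_) measurableSet_Ioi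
    simp only [min_eq_right hs.le]
    rw [rpow_neg (by linarith), one_div]

lemma DRight_eq_integral_increment (α : ℝ) (f : ℝ → ℝ) (t : ℝ) :
    DRight α f t = 1 / Gamma (-α) * ∫ s in Ioi (0 : ℝ), (f (t + s) - f t) / s ^ (1 + α) := by
  have h := (measurePreserving_add_left volume t).setIntegral_preimage_emb
    (measurableEmbedding_addLeft t) (fun τ => (f τ - f t) / (τ - t) ^ (1 + α)) (Ioi t)
  simp only [preimage_const_add_Ioi, sub_self, add_sub_cancel_left] at h
  rw [DRight, h]

lemma support_DRight_subset_Iic (α : ℝ) {f : ℝ → ℝ} {A : ℝ} (hf : Function.support f ⊆ Iic A) :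
    Function.support (DRight α f) ⊆ Iic A := by
  have f_eq_zero : ∀ x, A < x → f x = 0 := fun x hx =>
    Function.notMem_support.1 fun hne => hx.not_ge (hf hne)
  refine Function.support_subset_iff'.2 fun t ht => ?_
  have hAt : A < t := not_le.1 ht
  rw [DRight, setIntegral_eq_zero_of_forall_eq_zero, mul_zero]
  intro τ hτ
  rw [f_eq_zero t hAt, f_eq_zero τ (hAt.trans hτ), sub_zero, zero_div]

section Differentiation

open scoped NNReal

variable {α : ℝ} {f : ℝ → ℝ}

lemma abs_increment_le_mul_min_one {M : ℝ} {L : ℝ≥0} (hM : ∀ x, |f x| ≤ M)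
    (hL : LipschitzWith L f) (t : ℝ) {s : ℝ} (hs : 0 ≤ s) :
    |f (t + s) - f t| ≤ max (2 * M) L * min s 1 := by
  rcases le_total s 1 with h | h
  · calc |f (t + s) - f t| ≤ L * s := by
          simpa [Real.dist_eq, abs_of_nonneg hs] using hL.dist_le_mul (t + s) t
      _ ≤ max (2 * M) L * min s 1 := by
          rw [min_eq_left h]; gcongr; exact le_max_right _ _
  · calc |f (t + s) - f t| ≤ |f (t + s)| + |f t| := abs_sub _ _
      _ ≤ 2 * M := by linarith [hM (t + s), hM t]
      _ ≤ max (2 * M) L * min s 1 := by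
          rw [min_eq_right h, mul_one]; exact le_max_left _ _

lemma norm_increment_div_rpow_le {M : ℝ} {L : ℝ≥0} (hM : ∀ x, |f x| ≤ M)
    (hL : LipschitzWith L f) (r t : ℝ) {s : ℝ} (hs : 0 ≤ s) :
    ‖(f (t + s) - f t) / s ^ r‖ ≤ max (2 * M) L * (min s 1 / s ^ r) := by
  have hsr : 0 ≤ s ^ r := rpow_nonneg hs _
  rw [norm_div, norm_of_nonneg hsr, ← mul_div_assoc]
  exact div_le_div_of_nonneg_right (abs_increment_le_mul_min_one hM hL t hs) hsr

lemma aestronglyMeasurable_increment_div_rpow (hf : Measurable f) (r t : ℝ) {μ : Measure ℝ} :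
    AEStronglyMeasurable (fun s => (f (t + s) - f t) / s ^ r) μ :=
  Measurable.aestronglyMeasurable (.div (by fun_prop) (by fun_prop))

lemma integrableOn_increment_div_rpow (hα : α ∈ Ioo (0 : ℝ) 1) {M : ℝ} {L : ℝ≥0}
    (hM : ∀ x, |f x| ≤ M) (hL : LipschitzWith L f) (t : ℝ) :
    IntegrableOn (fun s => (f (t + s) - f t) / s ^ (1 + α)) (Ioi 0) := by
  refine ((integrableOn_min_one_div_rpow hα).const_mul (max (2 * M) L)).mono'
    (aestronglyMeasurable_increment_div_rpow hL.continuous.measurable _ t) ?_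
  filter_upwards [ae_restrict_mem measurableSet_Ioi] with s hs
  exact norm_increment_div_rpow_le hM hL _ t (le_of_lt hs)

lemma hasDerivAt_DRight (hα : α ∈ Ioo (0 : ℝ) 1) {M : ℝ} {L L' : ℝ≥0} (hf : Differentiable ℝ f)
    (hM : ∀ x, |f x| ≤ M) (hL : LipschitzWith L f) (hL' : LipschitzWith L' (deriv f)) (t : ℝ) :
    HasDerivAt (DRight α f) (DRight α (deriv f) t) t := by
  have hM' : ∀ x, |deriv f x| ≤ L := fun x => norm_deriv_le_of_lipschitz hL
  rw [funext (DRight_eq_integral_increment α f), DRight_eq_integral_increment]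
  refine HasDerivAt.const_mul _ (hasDerivAt_integral_of_dominated_loc_of_deriv_le
    (F' := fun x s => (deriv f (x + s) - deriv f x) / s ^ (1 + α))
    (bound := fun s => max (2 * (L : ℝ)) L' * (min s 1 / s ^ (1 + α))) univ_mem
    (Eventually.of_forall fun x =>
      aestronglyMeasurable_increment_div_rpow hf.continuous.measurable _ x)
    (integrableOn_increment_div_rpow hα hM hL t)
    (aestronglyMeasurable_increment_div_rpow hL'.continuous.measurable _ t) ?_
    ((integrableOn_min_one_div_rpow hα).const_mul _) ?_).2
  · filter_upwards [ae_restrict_mem measurableSet_Ioi] with s hs x _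
    exact norm_increment_div_rpow_le hM' hL' _ x (le_of_lt hs)
  · refine Eventually.of_forall fun s x _ => ?_
    exact (((hf (x + s)).hasDerivAt.comp_add_const x s).sub (hf x).hasDerivAt).div_const _

lemma exists_lipschitzWith_iteratedDeriv (hf : ContDiff ℝ (⊤ : ℕ∞) f)
    (hb : ∀ k, ∃ M, ∀ x, |iteratedDeriv k f x| ≤ M) (k : ℕ) :
    ∃ L, LipschitzWith L (iteratedDeriv k f) := by
  obtain ⟨M, hM⟩ := hb (k + 1)
  refine ⟨M.toNNReal, lipschitzWith_of_nnnorm_deriv_le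
    (hf.differentiable_iteratedDeriv k (mod_cast ENat.natCast_lt_top k)) fun x => ?_⟩
  rw [← iteratedDeriv_succ, ← norm_toNNReal]
  exact Real.toNNReal_mono (hM x)

lemma hasDerivAt_DRight_iteratedDeriv (hα : α ∈ Ioo (0 : ℝ) 1) (hf : ContDiff ℝ (⊤ : ℕ∞) f)
    (hb : ∀ k, ∃ M, ∀ x, |iteratedDeriv k f x| ≤ M) (k : ℕ) (t : ℝ) :
    HasDerivAt (DRight α (iteratedDeriv k f)) (DRight α (iteratedDeriv (k + 1) f) t) t := by
  obtain ⟨M, hM⟩ := hb k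
  obtain ⟨L, hL⟩ := exists_lipschitzWith_iteratedDeriv hf hb k
  obtain ⟨L', hL'⟩ := exists_lipschitzWith_iteratedDeriv hf hb (k + 1)
  rw [iteratedDeriv_succ] at hL' ⊢
  exact hasDerivAt_DRight hα (hf.differentiable_iteratedDeriv k (mod_cast ENat.natCast_lt_top k))
    hM hL hL' t

theorem iteratedDeriv_DRight (hα : α ∈ Ioo (0 : ℝ) 1) (hf : ContDiff ℝ (⊤ : ℕ∞) f)
    (hb : ∀ k, ∃ M, ∀ x, |iteratedDeriv k f x| ≤ M) (k : ℕ) :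
    iteratedDeriv k (DRight α f) = DRight α (iteratedDeriv k f) := by
  induction k with
  | zero => simp only [iteratedDeriv_zero]
  | succ k ih =>
    rw [iteratedDeriv_succ, ih]
    exact funext fun t => (hasDerivAt_DRight_iteratedDeriv hα hf hb k t).deriv

theorem contDiff_DRight (hα : α ∈ Ioo (0 : ℝ) 1) (hf : ContDiff ℝ (⊤ : ℕ∞) f)
    (hb : ∀ k, ∃ M, ∀ x, |iteratedDeriv k f x| ≤ M) :
    ContDiff ℝ (⊤ : ℕ∞) (DRight α f) := by
  refine contDiff_of_differentiable_iteratedDeriv fun k _ => ?_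
  rw [iteratedDeriv_DRight hα hf hb]
  exact fun t => (hasDerivAt_DRight_iteratedDeriv hα hf hb k t).differentiableAt

end Differentiation

section Decay

variable {f : ℝ → ℝ} {r C D : ℝ}

lemma nonneg_of_abs_le_div_rpow (hC : ∀ x, |f x| ≤ C / (1 + |x|) ^ r) : 0 ≤ C := by
  simpa using (abs_nonneg _).trans (hC 0)

lemma abs_le_of_abs_le_div_rpow (hr : 0 ≤ r) (hC : ∀ x, |f x| ≤ C / (1 + |x|) ^ r) (x : ℝ) :
    |f x| ≤ C :=
  (hC x).trans (div_le_self (nonneg_of_abs_le_div_rpow hC)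
    (one_le_rpow (le_add_of_nonneg_right (abs_nonneg x)) hr))

lemma integrable_of_abs_le_div_rpow (hf : AEStronglyMeasurable f) (hr : 1 < r)
    (hC : ∀ x, |f x| ≤ C / (1 + |x|) ^ r) : Integrable f := by
  have h : Integrable fun x : ℝ => (1 + ‖x‖) ^ (-r) := integrable_one_add_norm (by simpa using hr)
  refine (h.const_mul C).mono' hf (Eventually.of_forall fun x => (hC x).trans_eq ?_)
  rw [rpow_neg (by positivity), norm_eq_abs, div_eq_mul_inv]

lemma abs_increment_le_of_le_half (hf : Differentiable ℝ f) (hr : 0 ≤ r + 1)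
    (hD : ∀ x, |deriv f x| ≤ D / (1 + |x|) ^ (r + 1)) {t s : ℝ} (hs : 0 ≤ s)
    (hst : s ≤ (1 + |t|) / 2) :
    |f (t + s) - f t| ≤ 2 ^ (r + 1) * D * min s 1 / (1 + |t|) ^ r := by
  have hD0 : 0 ≤ D := nonneg_of_abs_le_div_rpow hD
  have ht : 0 < 1 + |t| := by positivity
  have deriv_le : ∀ x ∈ Icc t (t + s), ‖deriv f x‖ ≤ D / ((1 + |t|) / 2) ^ (r + 1) := by
    intro x hx
    have hx_far : (1 + |t|) / 2 ≤ 1 + |x| := by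
      have h₁ : |t| - |x| ≤ |t - x| := abs_sub_abs_le_abs_sub t x
      have h₂ : |t - x| ≤ s := abs_le.2 ⟨by linarith [hx.2], by linarith [hx.1]⟩
      linarith
    exact (hD x).trans (by gcongr)
  have mean_value : |f (t + s) - f t| ≤ D / ((1 + |t|) / 2) ^ (r + 1) * s := by
    simpa [abs_of_nonneg hs] using
      (convex_Icc t (t + s)).norm_image_sub_le_of_norm_deriv_le (fun x _ => hf x) deriv_le
        (left_mem_Icc.2 (by linarith)) (right_mem_Icc.2 (by linarith))
  have ratio_le : s / (1 + |t|) ≤ min s 1 :=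
    le_min (div_le_self hs (by linarith [abs_nonneg t])) ((div_le_one ht).2 (by linarith))
  calc |f (t + s) - f t| ≤ D / ((1 + |t|) / 2) ^ (r + 1) * s := mean_value
    _ = 2 ^ (r + 1) * D * (s / (1 + |t|)) / (1 + |t|) ^ r := by
        rw [div_rpow ht.le zero_le_two, rpow_add_one ht.ne']
        field_simp
    _ ≤ 2 ^ (r + 1) * D * min s 1 / (1 + |t|) ^ r := by gcongr

lemma abs_increment_le_of_half_le (hr : 0 ≤ r) (hC : ∀ x, |f x| ≤ C / (1 + |x|) ^ r) {t s : ℝ}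
    (hst : (1 + |t|) / 2 ≤ s) :
    |f (t + s) - f t| ≤ (2 * C * min s 1 + 2 ^ r * s ^ r * |f (t + s)|) / (1 + |t|) ^ r := by
  have hC0 : 0 ≤ C := nonneg_of_abs_le_div_rpow hC
  have hs : 1 / 2 ≤ s := by linarith [abs_nonneg t]
  have weight_le : (1 + |t|) ^ r ≤ 2 ^ r * s ^ r := by
    rw [← mul_rpow zero_le_two (by linarith)]
    exact rpow_le_rpow (by positivity) (by linarith) hr
  have half_le_min : 1 / 2 ≤ min s 1 := le_min hs (by norm_num)
  have at_left : |f t| * (1 + |t|) ^ r ≤ 2 * C * min s 1 :=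
    ((le_div_iff₀ (by positivity)).1 (hC t)).trans (by nlinarith)
  rw [le_div_iff₀ (by positivity)]
  calc |f (t + s) - f t| * (1 + |t|) ^ r
      ≤ (|f (t + s)| + |f t|) * (1 + |t|) ^ r := by gcongr; exact abs_sub _ _
    _ = |f t| * (1 + |t|) ^ r + (1 + |t|) ^ r * |f (t + s)| := by ring
    _ ≤ 2 * C * min s 1 + 2 ^ r * s ^ r * |f (t + s)| := by gcongr

lemma norm_increment_div_rpow_le_of_decay (hf : Differentiable ℝ f) (hr : 0 ≤ r)
    (hC : ∀ x, |f x| ≤ C / (1 + |x|) ^ r) (hD : ∀ x, |deriv f x| ≤ D / (1 + |x|) ^ (r + 1))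
    (t : ℝ) {s : ℝ} (hs : 0 < s) :
    ‖(f (t + s) - f t) / s ^ r‖ ≤
      ((2 ^ (r + 1) * D + 2 * C) * (min s 1 / s ^ r) + 2 ^ r * |f (t + s)|) / (1 + |t|) ^ r := by
  have hC0 : 0 ≤ C := nonneg_of_abs_le_div_rpow hC
  have hD0 : 0 ≤ D := nonneg_of_abs_le_div_rpow hD
  have hsr : 0 < s ^ r := rpow_pos_of_pos hs r
  have increment_le : |f (t + s) - f t| ≤
      ((2 ^ (r + 1) * D + 2 * C) * min s 1 + 2 ^ r * s ^ r * |f (t + s)|) / (1 + |t|) ^ r := by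
    rw [add_mul]
    rcases le_total s ((1 + |t|) / 2) with h | h
    · refine (abs_increment_le_of_le_half hf (by linarith) hD hs.le h).trans ?_
      gcongr
      rw [add_assoc]
      exact le_add_of_nonneg_right (by positivity)
    · refine (abs_increment_le_of_half_le hr hC h).trans ?_
      gcongr
      exact le_add_of_nonneg_left (by positivity)
  rw [norm_div, norm_of_nonneg hsr.le, div_le_iff₀ hsr]
  refine increment_le.trans_eq ?_
  field_simp

theorem exists_abs_DRight_le_div_rpow {α : ℝ} (hα : α ∈ Ioo (0 : ℝ) 1) (hf : Differentiable ℝ f)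
    (hC : ∀ x, |f x| ≤ C / (1 + |x|) ^ (1 + α))
    (hD : ∀ x, |deriv f x| ≤ D / (1 + |x|) ^ (1 + α + 1)) :
    ∃ B, ∀ t, |DRight α f t| ≤ B / (1 + |t|) ^ (1 + α) := by
  set K := 2 ^ (1 + α + 1) * D + 2 * C
  set G := ∫ s in Ioi (0 : ℝ), min s 1 / s ^ (1 + α)
  have f_integrable : Integrable f :=
    integrable_of_abs_le_div_rpow hf.continuous.aestronglyMeasurable (by linarith [hα.1]) hC
  refine ⟨|1 / Gamma (-α)| * (K * G + 2 ^ (1 + α) * ∫ x, |f x|), fun t => ?_⟩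
  have shift_integrable : Integrable fun s => |f (t + s)| := f_integrable.abs.comp_add_left t
  have tail_le : ∫ s in Ioi (0 : ℝ), |f (t + s)| ≤ ∫ x, |f x| := by
    rw [← integral_add_left_eq_self (fun x => |f x|) t]
    exact setIntegral_le_integral shift_integrable (Eventually.of_forall fun s => abs_nonneg _)
  have kernel_integrable := (integrableOn_min_one_div_rpow hα).const_mul K
  have tail_integrable := shift_integrable.integrableOn (s := Ioi 0) |>.const_mul (2 ^ (1 + α))
  have integral_le : |∫ s in Ioi (0 : ℝ), (f (t + s) - f t) / s ^ (1 + α)| ≤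
      (K * G + 2 ^ (1 + α) * ∫ s in Ioi (0 : ℝ), |f (t + s)|) / (1 + |t|) ^ (1 + α) := by
    rw [← integral_const_mul, ← integral_const_mul,
      ← integral_add kernel_integrable tail_integrable, ← integral_div, ← norm_eq_abs]
    refine norm_integral_le_of_norm_le ((kernel_integrable.add tail_integrable).div_const _) ?_
    filter_upwards [ae_restrict_mem measurableSet_Ioi] with s hs
    exact norm_increment_div_rpow_le_of_decay hf (by linarith [hα.1]) hC hD t hs
  rw [DRight_eq_integral_increment, abs_mul, mul_div_assoc]
  gcongr
  exact integral_le.trans (by gcongr)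

lemma exists_pos_abs_le_div_one_add_rpow (hr : 1 ≤ r) (hC : ∀ x, |f x| ≤ C / (1 + |x|) ^ r) :
    ∃ B > 0, ∀ x, |f x| ≤ B / (1 + |x| ^ r) := by
  have hC0 : 0 ≤ C := nonneg_of_abs_le_div_rpow hC
  refine ⟨C + 1, by positivity, fun x => (hC x).trans ?_⟩
  have weight_le : 1 + |x| ^ r ≤ (1 + |x|) ^ r := by
    simpa using add_rpow_le_rpow_add zero_le_one (abs_nonneg x) hr
  gcongr
  exact le_add_of_nonneg_right zero_le_one

end Decay

lemma exists_abs_iteratedDeriv_schwartzMap_le (φ : SchwartzMap ℝ ℝ) (r : ℝ) (k : ℕ) :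
    ∃ C, ∀ x, |iteratedDeriv k φ x| ≤ C / (1 + |x|) ^ r := by
  obtain ⟨m, hm⟩ := exists_nat_ge r
  refine ⟨_, fun x => (le_div_iff₀' (by positivity)).2 (le_trans ?_
    (SchwartzMap.one_add_le_sup_seminorm_apply (𝕜 := ℝ) (m := (m, k)) le_rfl le_rfl φ x))⟩
  rw [norm_iteratedFDeriv_eq_norm_iteratedDeriv, norm_eq_abs, norm_eq_abs, ← rpow_natCast]
  gcongr
  exact le_add_of_nonneg_right (abs_nonneg x)

theorem statement0_general {α : ℝ} (hα : α ∈ Ioo (0 : ℝ) 1) {f : ℝ → ℝ}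
    (hf : ContDiff ℝ (⊤ : ℕ∞) f)
    (hdecay : ∀ k, ∃ C, ∀ x, |iteratedDeriv k f x| ≤ C / (1 + |x|) ^ (2 + α)) :
    ContDiff ℝ (⊤ : ℕ∞) (DRight α f) ∧
    (∀ A, Function.support f ⊆ Iic A → Function.support (DRight α f) ⊆ Iic A) ∧
    ∀ k : ℕ, ∃ C > 0, ∀ t : ℝ, |iteratedDeriv k (DRight α f) t| ≤ C / (1 + |t| ^ (1 + α)) := by
  have hbounded : ∀ k, ∃ M, ∀ x, |iteratedDeriv k f x| ≤ M := fun k =>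
    (hdecay k).imp fun C hC => abs_le_of_abs_le_div_rpow (by linarith [hα.1]) hC
  refine ⟨contDiff_DRight hα hf hbounded, fun A => support_DRight_subset_Iic α, fun k => ?_⟩
  obtain ⟨C, hC⟩ := hdecay k
  obtain ⟨D, hD⟩ := hdecay (k + 1)
  have hC' : ∀ x, |iteratedDeriv k f x| ≤ C / (1 + |x|) ^ (1 + α) := fun x =>
    (hC x).trans (div_le_div_of_nonneg_left (nonneg_of_abs_le_div_rpow hC) (by positivity)
      (rpow_le_rpow_of_exponent_le (le_add_of_nonneg_right (abs_nonneg x)) (by linarith)))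
  rw [iteratedDeriv_succ, show 2 + α = 1 + α + 1 by ring] at hD
  obtain ⟨B, hB⟩ := exists_abs_DRight_le_div_rpow hα
    (hf.differentiable_iteratedDeriv k (mod_cast ENat.natCast_lt_top k)) hC' hD
  rw [iteratedDeriv_DRight hα hf hbounded]
  exact exists_pos_abs_le_div_one_add_rpow (by linarith [hα.1]) hB

/-- If `φ` is a Schwartz function supported in `(-∞, A]` and `0 < α < 1`,
then `(D_right)^α φ` is `C^∞`, supported in `(-∞, A]`, and every derivative of it is bounded
by `C/(1+|t|^{1+α})` for some constant `C > 0`. -/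
theorem statement0 (α : ℝ) (hα : α ∈ Set.Ioo (0 : ℝ) 1) (φ : SchwartzMap ℝ ℝ) (A : ℝ)
    (hsupp : Function.support (fun t => φ t) ⊆ Set.Iic A) :
    ContDiff ℝ (⊤ : ℕ∞) (DRight α (fun t => φ t)) ∧
    Function.support (DRight α (fun t => φ t)) ⊆ Set.Iic A ∧
    ∀ k : ℕ, ∃ C > 0, ∀ t : ℝ,
      |iteratedDeriv k (DRight α (fun t => φ t)) t| ≤ C / (1 + |t| ^ (1 + α)) := by
  obtain ⟨smooth, support_subset, decay⟩ :=
    statement0_general hα (φ.smooth _) (exists_abs_iteratedDeriv_schwartzMap_le φ (2 + α))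
  exact ⟨smooth, support_subset A hsupp, decay⟩
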